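/- arXiv:2405.11085 — 3 statements merged into one kernel-verified Lean document; each statement's English description precedes it below -/
import Mathlib

section
/- Let M = (Q,T) be a d-dimensional affine continuous VASS all of whose transition matrices have only non-negative entries. For every configuration p(u) of M and every state q ∈ Q: p(u) can reach some configuration whose state is q (i.e., p(u) →* q(v') for some v' ∈ ℚ₊^d) if and only if, in the support abstraction graph SU_M, there is a directed path from the vertex (p, supp(u)) to some vertex of the form (q, S). -/
namespace ACVASS

/-- Vectors of rationals indexed by counters. -/
abbrev Vec (d : ℕ) := Fin d → ℚ

/-- A vector is componentwise non-negative (i.e. lies in ℚ₊^d). -/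
def NonNeg {d : ℕ} (u : Vec d) : Prop := ∀ i, 0 ≤ u i

/-- Square integer matrices of dimension d. -/
abbrev Mat (d : ℕ) := Matrix (Fin d) (Fin d) ℤ

/-- Transitions of a d-dimensional affine continuous VASS. -/
abbrev Trans (Q : Type) (d : ℕ) := Q × Mat d × (Fin d → ℤ) × Q

def Trans.src {Q : Type} {d : ℕ} (t : Trans Q d) : Q := t.1
def Trans.mat {Q : Type} {d : ℕ} (t : Trans Q d) : Mat d := t.2.1
def Trans.upd {Q : Type} {d : ℕ} (t : Trans Q d) : Fin d → ℤ := t.2.2.1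
def Trans.tgt {Q : Type} {d : ℕ} (t : Trans Q d) : Q := t.2.2.2

/-- Cast an integer matrix to a rational matrix. -/
def castMat {d : ℕ} (A : Mat d) : Matrix (Fin d) (Fin d) ℚ := A.map (Int.cast)

/-- Cast an integer vector to a rational vector. -/
def castVec {d : ℕ} (b : Fin d → ℤ) : Vec d := fun i => (b i : ℚ)

/-- A d-dimensional affine continuous VASS: a finite set of transitions. -/
structure ACV (Q : Type) (d : ℕ) where
  T : Finset (Trans Q d)

/-- Configurations: a state together with a vector of counter values. -/
abbrev Conf (Q : Type) (d : ℕ) := Q × Vec d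

/-- A step `p(u) →^{αt} q(v)`: `t` is a transition of `M`, `α ∈ (0,1]`, both
configurations are non-negative and `v = A·u + α·b`. -/
def Step {Q : Type} {d : ℕ} (M : ACV Q d) (C : Conf Q d) (α : ℚ) (t : Trans Q d)
    (C' : Conf Q d) : Prop :=
  t ∈ M.T ∧ 0 < α ∧ α ≤ 1 ∧ C.1 = t.src ∧ C'.1 = t.tgt ∧
    NonNeg C.2 ∧ NonNeg C'.2 ∧
    C'.2 = (castMat t.mat).mulVec C.2 + α • castVec t.upd

/-- Firing sequences. -/
abbrev FSeq (Q : Type) (d : ℕ) := List (ℚ × Trans Q d)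

/-- `Run M C π C'` : `C →^π C'`, i.e. the steps of `π` can be realized in order. -/
inductive Run {Q : Type} {d : ℕ} (M : ACV Q d) : Conf Q d → FSeq Q d → Conf Q d → Prop
  | nil (C : Conf Q d) (h : NonNeg C.2) : Run M C [] C
  | cons {C C' C'' : Conf Q d} {α : ℚ} {t : Trans Q d} {π : FSeq Q d} :
      Step M C α t C' → Run M C' π C'' → Run M C ((α, t) :: π) C''

/-- `C →* C'`. -/
def Reach {Q : Type} {d : ℕ} (M : ACV Q d) (C C' : Conf Q d) : Prop := ∃ π, Run M C π C'

/-- `p(u)` covers `q(v)`: `p(u) →* q(v')` for some `v' ≥ v`. -/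
def Covers {Q : Type} {d : ℕ} (M : ACV Q d) (C C' : Conf Q d) : Prop :=
  ∃ v', C'.2 ≤ v' ∧ Reach M C (C'.1, v')

/-- Support of a vector. -/
def supp {d : ℕ} (u : Vec d) : Set (Fin d) := {i | u i ≠ 0}

/-- `supp_t^-(x) = {y : A(x,y) > 0}`. -/
def suppMinus {Q : Type} {d : ℕ} (t : Trans Q d) (x : Fin d) : Set (Fin d) :=
  {y | 0 < t.mat x y}

/-- `supp_t^+ = {x : b(x) > 0}`. -/
def suppPlus {Q : Type} {d : ℕ} (t : Trans Q d) : Set (Fin d) := {x | 0 < t.upd x}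

/-- `supp_t^p(x)`: counters that can pump `x` via transition `t`. -/
def suppPump {Q : Type} {d : ℕ} (t : Trans Q d) (x : Fin d) : Set (Fin d) :=
  {y | (y ≠ x ∧ 0 < t.mat x y) ∨ (y = x ∧ 1 < t.mat x y)}

/-- The set of transitions occurring in a firing sequence. -/
def seqSupp {Q : Type} {d : ℕ} (π : FSeq Q d) : Set (Trans Q d) := {t | ∃ α, (α, t) ∈ π}

/-- Non-negative matrix. -/
def NonNegMat {d : ℕ} (A : Mat d) : Prop := ∀ i j, 0 ≤ A i j

/-- Non-negative self-loop matrix: non-negative with no zero diagonal entry. -/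
def SelfLoopMat {d : ℕ} (A : Mat d) : Prop := NonNegMat A ∧ ∀ i, A i i ≠ 0

/-- All transition matrices of `M` are non-negative. -/
def NonNegVASS {Q : Type} {d : ℕ} (M : ACV Q d) : Prop := ∀ t ∈ M.T, NonNegMat t.mat

/-- All transition matrices of `M` are non-negative self-loop matrices. -/
def SelfLoopVASS {Q : Type} {d : ℕ} (M : ACV Q d) : Prop := ∀ t ∈ M.T, SelfLoopMat t.mat

/-- `β·π`: scale all fractions of a firing sequence by `β`. -/
def scaleSeq {Q : Type} {d : ℕ} (β : ℚ) (π : FSeq Q d) : FSeq Q d :=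
  π.map (fun p => (β * p.1, p.2))

/-- Counter `x` is pumped by transition `t` in the run obtained by firing `π` from `C`:
some step of the run uses `t` from a source configuration `C₁` with a counter
`y ∈ supp_t^p(x)` of positive value. -/
def PumpedBy {Q : Type} {d : ℕ} (M : ACV Q d) (C : Conf Q d) (π : FSeq Q d)
    (t : Trans Q d) (x : Fin d) : Prop :=
  ∃ (π₁ : FSeq Q d) (α : ℚ) (π₂ : FSeq Q d) (C₁ C₂ : Conf Q d),
    π = π₁ ++ (α, t) :: π₂ ∧ Run M C π₁ C₁ ∧ Step M C₁ α t C₂ ∧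
    ∃ y ∈ suppPump t x, 0 < C₁.2 y

/-- Counter `x` is pumped in the run obtained by firing `π` from `C`. -/
def Pumps {Q : Type} {d : ℕ} (M : ACV Q d) (C : Conf Q d) (π : FSeq Q d) (x : Fin d) : Prop :=
  ∃ t, PumpedBy M C π t x

/-- Edges of the support abstraction `SU_M`. -/
def SuppEdge {Q : Type} {d : ℕ} (M : ACV Q d) (v : Q × Set (Fin d)) (t : Trans Q d)
    (v' : Q × Set (Fin d)) : Prop :=
  t ∈ M.T ∧ v.1 = t.src ∧ v'.1 = t.tgt ∧
    ∀ x : Fin d,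
      (t.upd x < 0 → (suppMinus t x ∩ v.2).Nonempty) ∧
      (0 < t.upd x → x ∈ v'.2) ∧
      (x ∈ v'.2 → 0 < t.upd x ∨ (suppMinus t x ∩ v.2).Nonempty)

/-- Directed-path reachability in the support abstraction `SU_M`. -/
def SuppReach {Q : Type} {d : ℕ} (M : ACV Q d) :
    Q × Set (Fin d) → Q × Set (Fin d) → Prop :=
  Relation.ReflTransGen (fun a b => ∃ t, SuppEdge M a t b)

/-- A step of the continuous VASS `M_X` (only the counters in `X` are tracked). -/
def StepX {Q : Type} {d : ℕ} (M : ACV Q d) (X : Set (Fin d)) (p : Q) (u : Vec d) (α : ℚ)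
    (t : Trans Q d) (q : Q) (v : Vec d) : Prop :=
  t ∈ M.T ∧ 0 < α ∧ α ≤ 1 ∧ p = t.src ∧ q = t.tgt ∧
    (∀ i ∈ X, 0 ≤ u i) ∧ (∀ i ∈ X, 0 ≤ v i) ∧ (∀ i ∈ X, v i = u i + α * castVec t.upd i)

/-- A run of the continuous VASS `M_X`; vectors matter only on the counters of `X`. -/
inductive RunX {Q : Type} {d : ℕ} (M : ACV Q d) (X : Set (Fin d)) :
    Q → Vec d → FSeq Q d → Q → Vec d → Prop
  | nil (p : Q) (u v : Vec d) (h : ∀ i ∈ X, 0 ≤ u i ∧ u i = v i) : RunX M X p u [] p v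
  | cons {p r q : Q} {u w v : Vec d} {α : ℚ} {t : Trans Q d} {π : FSeq Q d} :
      StepX M X p u α t r w → RunX M X r w π q v → RunX M X p u ((α, t) :: π) q v

/-- One edge of the graph `G_M` using only transitions from `S`. -/
def GStep {Q : Type} {d : ℕ} (S : Set (Trans Q d)) (a b : Q) : Prop :=
  ∃ t ∈ S, t.src = a ∧ t.tgt = b

/-- A (possibly empty) path in the graph `G_M` using only transitions from `S`. -/
def GPath {Q : Type} {d : ℕ} (S : Set (Trans Q d)) : Q → Q → Prop :=
  Relation.ReflTransGen (GStep S)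

/-- `Rep-Half(π)`: the i-th fraction of `π` is divided by `2^i`. -/
def repHalf {Q : Type} {d : ℕ} : FSeq Q d → FSeq Q d
  | [] => []
  | (α, t) :: rest => (α / 2, t) :: scaleSeq (1 / 2) (repHalf rest)

/-- Descending partial product `A_{ℓ-1} ⋯ A_j` (0-indexed); for `j = ℓ` this is
the identity matrix. -/
def descProd {d ℓ : ℕ} (A : Fin ℓ → Matrix (Fin d) (Fin d) ℚ) (j : ℕ) :
    Matrix (Fin d) (Fin d) ℚ :=
  (((List.finRange ℓ).drop j).reverse.map A).prod

/-- The permutation matrix `P_σ` with `P_σ(i,j) = 1` iff `σ(i) = j`. -/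
def permMat {n : ℕ} (σ : Equiv.Perm (Fin n)) : Matrix (Fin n) (Fin n) ℤ :=
  Matrix.of fun i j => if σ i = j then 1 else 0

/-- A matrix is a permutation matrix. -/
def IsPermMat {d : ℕ} (A : Mat d) : Prop := ∃ σ : Equiv.Perm (Fin d), A = permMat σ

/-- The n×n block-diagonal matrix with blocks `I_o`, `A`, `I_{n-o-k}`:
`A` occupies rows/columns `o,…,o+k-1` and the rest is identity. -/
def applyBlock {k : ℕ} (A : Matrix (Fin k) (Fin k) ℤ) (o n : ℕ) :
    Matrix (Fin n) (Fin n) ℤ :=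
  Matrix.of fun r c =>
    if h : o ≤ r.val ∧ r.val < o + k ∧ o ≤ c.val ∧ c.val < o + k then
      A ⟨r.val - o, by omega⟩ ⟨c.val - o, by omega⟩
    else if r.val = c.val then 1 else 0

/-- Transitions of a continuous VASS (with identity matrices left implicit). -/
abbrev CTrans (Q : Type) (d : ℕ) := Q × (Fin d → ℤ) × Q

/-- Zero-tests. -/
abbrev ZTest (Q : Type) (d : ℕ) := Q × Fin d × Q

/-- A d-dimensional continuous VASS with zero-tests. -/
structure CVZ (Q : Type) (d : ℕ) where
  T : Finset (CTrans Q d)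
  T0 : Finset (ZTest Q d)

/-- A transition step of a continuous VASS with zero-tests. -/
def CStep {Q : Type} {d : ℕ} (M : CVZ Q d) (C : Conf Q d) (α : ℚ) (t : CTrans Q d)
    (C' : Conf Q d) : Prop :=
  t ∈ M.T ∧ 0 < α ∧ α ≤ 1 ∧ C.1 = t.1 ∧ C'.1 = t.2.2 ∧
    NonNeg C.2 ∧ NonNeg C'.2 ∧ C'.2 = C.2 + α • castVec t.2.1

/-- A zero-test step of a continuous VASS with zero-tests. -/
def ZStep {Q : Type} {d : ℕ} (M : CVZ Q d) (C : Conf Q d) (t : ZTest Q d)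
    (C' : Conf Q d) : Prop :=
  t ∈ M.T0 ∧ C.1 = t.1 ∧ C'.1 = t.2.2 ∧ NonNeg C.2 ∧ C.2 t.2.1 = 0 ∧ C'.2 = C.2

/-- A d-dimensional continuous VASS. -/
structure CV (Q : Type) (d : ℕ) where
  T : Finset (CTrans Q d)

/-- A step of a continuous VASS. -/
def CVStep {Q : Type} {d : ℕ} (M : CV Q d) (C : Conf Q d) (α : ℚ) (t : CTrans Q d)
    (C' : Conf Q d) : Prop :=
  t ∈ M.T ∧ 0 < α ∧ α ≤ 1 ∧ C.1 = t.1 ∧ C'.1 = t.2.2 ∧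
    NonNeg C.2 ∧ NonNeg C'.2 ∧ C'.2 = C.2 + α • castVec t.2.1

/-- Reachability (`→*`) in a continuous VASS. -/
def CVReach {Q : Type} {d : ℕ} (M : CV Q d) : Conf Q d → Conf Q d → Prop :=
  Relation.ReflTransGen (fun C C' => ∃ α t, CVStep M C α t C')


/-! Because the matrices are non-negative, no cancellation occurs in `A·u`: the entry `(A·u)(x)` is
positive exactly when some counter of `supp u` feeds `x`. Hence every step projects to an edge of
the support abstraction. Conversely, an edge allows `x` to decrease only when `(A·u)(x) > 0`, so
every sufficiently small fraction `α > 0` keeps all counters non-negative and makes all counters in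
the support of the target positive. The run may produce a larger support than the abstract path
does, which is harmless because edges of the support abstraction are monotone in the source. -/

open Filter
open scoped Matrix Topology

section OrderedSemiring

variable {R : Type*} [Semiring R] [LinearOrder R] [IsStrictOrderedRing R]

theorem dotProduct_pos_iff_of_nonneg {n : Type*} [Fintype n] {v w : n → R}
    (hv : 0 ≤ v) (hw : 0 ≤ w) : 0 < v ⬝ᵥ w ↔ ∃ i, 0 < v i ∧ 0 < w i := by
  have pos_mul_iff (i : n) : 0 < v i * w i ↔ 0 < v i ∧ 0 < w i :=
    ⟨fun h ↦ ⟨pos_of_mul_pos_left h (hw i), pos_of_mul_pos_right h (hv i)⟩,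
      fun h ↦ mul_pos h.1 h.2⟩
  simp [dotProduct, Finset.sum_pos_iff_of_nonneg fun i _ ↦ mul_nonneg (hv i) (hw i), pos_mul_iff]

theorem eventually_add_mul_nonneg_and_pos [TopologicalSpace R] [OrderClosedTopology R]
    [IsTopologicalSemiring R] {a b : R} (ha : 0 ≤ a) (hab : b < 0 → 0 < a) :
    ∀ᶠ r in 𝓝[>] (0 : R), 0 ≤ a + r * b ∧ (0 < b ∨ 0 < a → 0 < a + r * b) := by
  rcases ha.eq_or_lt with rfl | a_pos
  · have b_nonneg : 0 ≤ b := le_of_not_gt fun hb ↦ (hab hb).false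
    filter_upwards [self_mem_nhdsWithin] with r (r_pos : 0 < r)
    simpa [r_pos] using mul_nonneg r_pos.le b_nonneg
  · have tendsto_a : Tendsto (fun r ↦ a + r * b) (𝓝[>] 0) (𝓝 a) := by
      have : Continuous fun r ↦ a + r * b := by fun_prop
      simpa using (this.tendsto 0).mono_left nhdsWithin_le_nhds
    filter_upwards [tendsto_a.eventually_const_lt a_pos] with r hr
    exact ⟨hr.le, fun _ ↦ hr⟩

end OrderedSemiring

section Simulation

variable {Q : Type} {d : ℕ} {M : ACV Q d} {t : Trans Q d} {u : Vec d}

/-- The vector `A·u + α·b` obtained by firing the fraction `α` of `t = (p, A, b, q)` at `u`,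
whether or not it is non-negative. -/
def fire (t : Trans Q d) (α : ℚ) (u : Vec d) : Vec d :=
  castMat t.mat *ᵥ u + α • castVec t.upd

theorem fire_apply (t : Trans Q d) (α : ℚ) (u : Vec d) (x : Fin d) :
    fire t α u x = (castMat t.mat *ᵥ u) x + α * t.upd x := rfl

theorem castMat_row_nonneg {A : Mat d} (hA : NonNegMat A) (x : Fin d) : 0 ≤ castMat A x :=
  fun y ↦ Int.cast_nonneg (hA x y)

theorem castMat_mulVec_nonneg {A : Mat d} (hA : NonNegMat A) (hu : NonNeg u) :
    NonNeg (castMat A *ᵥ u) :=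
  fun x ↦ dotProduct_nonneg_of_nonneg (castMat_row_nonneg hA x) hu

theorem mem_supp_iff_pos (hu : NonNeg u) {x : Fin d} : x ∈ supp u ↔ 0 < u x :=
  (hu x).lt_iff_ne'.symm

theorem suppMinus_inter_supp_nonempty_iff (ht : NonNegMat t.mat) (hu : NonNeg u) {x : Fin d} :
    (suppMinus t x ∩ supp u).Nonempty ↔ 0 < (castMat t.mat *ᵥ u) x := by
  refine Iff.trans ?_ (dotProduct_pos_iff_of_nonneg (castMat_row_nonneg ht x) hu).symm
  simp [Set.Nonempty, mem_supp_iff_pos hu, suppMinus, castMat]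

theorem SuppEdge.mono_source {p q : Q} {S S' X : Set (Fin d)}
    (h : SuppEdge M (p, S) t (q, X)) (hS : S ⊆ S') : SuppEdge M (p, S') t (q, X) := by
  obtain ⟨ht, hp, hq, hX⟩ := h
  have nonempty_mono (x : Fin d) :
      (suppMinus t x ∩ S).Nonempty → (suppMinus t x ∩ S').Nonempty :=
    Set.Nonempty.mono (Set.inter_subset_inter_right _ hS)
  exact ⟨ht, hp, hq, fun x ↦ ⟨fun hb ↦ nonempty_mono x ((hX x).1 hb), (hX x).2.1,
    fun hx ↦ ((hX x).2.2 hx).imp_right (nonempty_mono x)⟩⟩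

theorem Step.target_nonneg {C C' : Conf Q d} {α : ℚ} (h : Step M C α t C') : NonNeg C'.2 :=
  h.2.2.2.2.2.2.1

theorem Step.suppEdge (hM : NonNegVASS M) {C C' : Conf Q d} {α : ℚ} (h : Step M C α t C') :
    SuppEdge M (C.1, supp C.2) t (C'.1, supp C'.2) := by
  obtain ⟨ht, α_pos, -, hsrc, htgt, hC, hC', hfire⟩ := h
  refine ⟨ht, hsrc, htgt, fun x ↦ ?_⟩
  have value_eq : C'.2 x = (castMat t.mat *ᵥ C.2) x + α * t.upd x := congrFun hfire x
  have value_nonneg := hC' x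
  have mulVec_nonneg := castMat_mulVec_nonneg (hM t ht) hC x
  rw [suppMinus_inter_supp_nonempty_iff (hM t ht) hC, mem_supp_iff_pos hC']
  refine ⟨fun upd_neg ↦ ?_, fun upd_pos ↦ ?_, fun value_pos ↦ ?_⟩
  · linarith [mul_neg_of_pos_of_neg α_pos (Int.cast_lt_zero.2 upd_neg)]
  · linarith [mul_pos α_pos (Int.cast_pos.2 upd_pos)]
  · by_contra! ⟨upd_nonpos, mulVec_nonpos⟩
    linarith [mul_nonpos_of_nonneg_of_nonpos α_pos.le (Int.cast_nonpos.2 upd_nonpos)]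

theorem SuppEdge.eventually_step (hM : NonNegVASS M) {p q : Q} {S : Set (Fin d)}
    (hu : NonNeg u) (h : SuppEdge M (p, supp u) t (q, S)) :
    ∀ᶠ α in 𝓝[>] (0 : ℚ), Step M (p, u) α t (q, fire t α u) ∧ S ⊆ supp (fire t α u) := by
  obtain ⟨ht, hsrc, htgt, hS⟩ := h
  simp only [suppMinus_inter_supp_nonempty_iff (hM t ht) hu] at hS
  have eventually_fire : ∀ᶠ α in 𝓝[>] (0 : ℚ), ∀ x, 0 ≤ fire t α u x ∧
      (0 < t.upd x ∨ 0 < (castMat t.mat *ᵥ u) x → 0 < fire t α u x) := by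
    refine eventually_all.2 fun x ↦ ?_
    simpa [fire_apply] using eventually_add_mul_nonneg_and_pos (b := (t.upd x : ℚ))
      (castMat_mulVec_nonneg (hM t ht) hu x) (by simpa using (hS x).1)
  filter_upwards [eventually_fire, Ioc_mem_nhdsGT (zero_lt_one (α := ℚ))]
    with α hfire ⟨α_pos, α_le_one⟩
  exact ⟨⟨ht, α_pos, α_le_one, hsrc, htgt, hu, fun x ↦ (hfire x).1, rfl⟩,
    fun x hx ↦ ((hfire x).2 ((hS x).2.2 hx)).ne'⟩

theorem Reach.suppReach (hM : NonNegVASS M) {C C' : Conf Q d} (h : Reach M C C') :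
    SuppReach M (C.1, supp C.2) (C'.1, supp C'.2) := by
  obtain ⟨π, run⟩ := h
  induction run with
  | nil => exact .refl
  | cons step _ ih => exact .head ⟨_, step.suppEdge hM⟩ ih

theorem SuppReach.exists_reach (hM : NonNegVASS M) {a b : Q × Set (Fin d)}
    (h : SuppReach M a b) (hu : NonNeg u) (ha : a.2 ⊆ supp u) :
    ∃ v, NonNeg v ∧ Reach M (a.1, u) (b.1, v) ∧ b.2 ⊆ supp v := by
  induction h using Relation.ReflTransGen.head_induction_on generalizing u with
  | refl => exact ⟨u, hu, ⟨[], .nil _ hu⟩, ha⟩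
  | head edge _ ih =>
    obtain ⟨t, edge⟩ := edge
    obtain ⟨α, step, subset_supp⟩ := ((edge.mono_source ha).eventually_step hM hu).exists
    obtain ⟨v, hv, ⟨π, run⟩, hb⟩ := ih step.target_nonneg subset_supp
    exact ⟨v, hv, ⟨(α, t) :: π, .cons step run⟩, hb⟩

end Simulation

theorem state_reachability_iff_support_abstraction_general
    {Q : Type} {d : ℕ} (M : ACV Q d) (hM : NonNegVASS M)
    (p q : Q) (u : Vec d) (hu : NonNeg u) (X : Set (Fin d)) :
    (∃ v : Vec d, NonNeg v ∧ Reach M (p, u) (q, v) ∧ X ⊆ supp v) ↔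
      ∃ S : Set (Fin d), SuppReach M (p, supp u) (q, S) ∧ X ⊆ S := by
  constructor
  · rintro ⟨v, -, reach, hX⟩
    exact ⟨supp v, reach.suppReach hM, hX⟩
  · rintro ⟨S, path, hX⟩
    obtain ⟨v, hv, reach, hS⟩ := path.exists_reach hM hu subset_rfl
    exact ⟨v, hv, reach, hX.trans hS⟩

/-- state-reachability corresponds to reachability in the
support abstraction, for affine continuous VASS with non-negative matrices. -/
theorem state_reachability_iff_support_abstraction
    {Q : Type} [Fintype Q] {d : ℕ} (M : ACV Q d) (hM : NonNegVASS M)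
    (p q : Q) (u : Vec d) (hu : NonNeg u) :
    (∃ v : Vec d, NonNeg v ∧ Reach M (p, u) (q, v)) ↔
      ∃ S : Set (Fin d), SuppReach M (p, supp u) (q, S) := by
  simpa using state_reachability_iff_support_abstraction_general M hM p q u hu ∅

end ACVASS
end

section
/- (Pumping Counters Lemma) Let M be a d-dimensional affine continuous VASS all of whose transition matrices are non-negative self-loop matrices, and let ρ: p(u) →^π p(v) be a run. Let S be a set of counters such that every x ∈ S is pumped in ρ by some transition t with supp_t^p(x) ∩ supp(v) ≠ ∅. Then for every rational K > 0 there exists n ≥ 1 such that, letting π' be the concatenation of (1/2)·π followed by n copies of (1/(2n))·π, there is a run p(u) →^{π'} p(w) with w ≥ v componentwise and w(x) > K for every x ∈ S. -/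
namespace ACVASS

/-! Suppose `π` leads from `u` to `v`. Then `β·π` leads from `β·u + z` to `β·v + P z`, where `P` is
the product of the matrices along `π`: the run is affine, and the extra non-negative amount `z`
cannot make a counter negative. Hence that copy of `β·π` changes the counters by
`β(v - u) + (P - 1) z`, and self-loops make `P - 1` entrywise non-negative. After `(1/2)·π`, every
copy of `(1/(2n))·π` can be fired with some `z ≥ v/2`, so the `n` copies together reach at least
`v + (n/2) (P - 1) v`. If some transition of `π` has a counter of `supp v` pumping `x`, then
`((P - 1) v) x > 0`, and the value of `x` grows without bound as `n → ∞`. -/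

theorem smul_le_sub_smul_of_add_smul_sub_le {𝕜 E : Type*} [CommRing 𝕜] [PartialOrder 𝕜]
    [IsOrderedRing 𝕜] [AddCommGroup E] [PartialOrder E] [IsOrderedAddMonoid E] [Module 𝕜 E]
    [PosSMulMono 𝕜 E] {β γ c : 𝕜} {u v w : E} (hu : 0 ≤ u) (hv : 0 ≤ v) (hc : 0 ≤ c)
    (hsum : γ + c + β ≤ 1) (hw : u + (γ + c) • (v - u) ≤ w) : γ • v ≤ w - β • u :=
  calc γ • v ≤ γ • v + (c • v + (1 - (γ + c + β)) • u) :=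
        le_add_of_nonneg_right
          (add_nonneg (smul_nonneg hc hv) (smul_nonneg (sub_nonneg.2 hsum) hu))
    _ = u + (γ + c) • (v - u) - β • u := by module
    _ ≤ w - β • u := by gcongr

section Matrices

variable {d : ℕ} {A B : Mat d}

theorem castMat_one : castMat (1 : Mat d) = 1 :=
  (Int.castRingHom ℚ).mapMatrix.map_one

theorem castMat_mul (A B : Mat d) : castMat (A * B) = castMat A * castMat B :=
  (Int.castRingHom ℚ).mapMatrix.map_mul A B

theorem castMat_sub (A B : Mat d) : castMat (A - B) = castMat A - castMat B :=
  (Int.castRingHom ℚ).mapMatrix.map_sub A B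

theorem NonNegMat.add (hA : NonNegMat A) (hB : NonNegMat B) : NonNegMat (A + B) :=
  fun i j => add_nonneg (hA i j) (hB i j)

theorem NonNegMat.mul (hA : NonNegMat A) (hB : NonNegMat B) : NonNegMat (A * B) :=
  fun i j => by
    rw [Matrix.mul_apply]
    exact Finset.sum_nonneg fun k _ => mul_nonneg (hA i k) (hB k j)

theorem NonNegMat.mulVec_nonneg (hA : NonNegMat A) {z : Vec d} (hz : 0 ≤ z) :
    0 ≤ (castMat A).mulVec z :=
  fun i => Finset.sum_nonneg fun j _ => mul_nonneg (Int.cast_nonneg (hA i j)) (hz j)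

theorem NonNegMat.mulVec_mono (hA : NonNegMat A) {y z : Vec d} (h : y ≤ z) :
    (castMat A).mulVec y ≤ (castMat A).mulVec z := by
  rw [← sub_nonneg, ← Matrix.mulVec_sub]
  exact hA.mulVec_nonneg (sub_nonneg.2 h)

theorem NonNegMat.mulVec_pos (hA : NonNegMat A) {z : Vec d} (hz : 0 ≤ z) {x y : Fin d}
    (hxy : 0 < A x y) (hy : 0 < z y) : 0 < (castMat A).mulVec z x :=
  Finset.sum_pos' (fun j _ => mul_nonneg (Int.cast_nonneg (hA x j)) (hz j))
    ⟨y, Finset.mem_univ y, mul_pos (Int.cast_pos.2 hxy) hy⟩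

theorem selfLoopMat_iff_nonNegMat_sub_one : SelfLoopMat A ↔ NonNegMat (A - 1) := by
  constructor
  · rintro ⟨hA, hdiag⟩ i j
    have hij := hA i j
    rcases eq_or_ne i j with rfl | hne
    · have hi := hdiag i
      rw [Matrix.sub_apply, Matrix.one_apply_eq]
      lia
    · rwa [Matrix.sub_apply, Matrix.one_apply_ne hne, sub_zero]
  · intro h
    refine ⟨fun i j => ?_, fun i => ?_⟩
    · have hij := h i j
      rw [Matrix.sub_apply, Matrix.one_apply] at hij
      split_ifs at hij <;> lia
    · have hi := h i i
      rw [Matrix.sub_apply, Matrix.one_apply_eq] at hi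
      lia

theorem selfLoopMat_one : SelfLoopMat (1 : Mat d) :=
  selfLoopMat_iff_nonNegMat_sub_one.2 (by simp [NonNegMat])

theorem SelfLoopMat.nonNegMat_sub_one (hA : SelfLoopMat A) : NonNegMat (A - 1) :=
  selfLoopMat_iff_nonNegMat_sub_one.1 hA

theorem nonNegMat_mul_sub_left (hA : NonNegMat A) (hB : SelfLoopMat B) :
    NonNegMat (A * B - A) := by
  simpa only [mul_sub, mul_one] using hA.mul hB.nonNegMat_sub_one

theorem nonNegMat_mul_sub_right (hA : SelfLoopMat A) (hB : NonNegMat B) :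
    NonNegMat (A * B - B) := by
  simpa only [sub_mul, one_mul] using hA.nonNegMat_sub_one.mul hB

theorem SelfLoopMat.mul (hA : SelfLoopMat A) (hB : SelfLoopMat B) : SelfLoopMat (A * B) :=
  selfLoopMat_iff_nonNegMat_sub_one.2 <| by
    simpa only [sub_add_sub_cancel] using
      (nonNegMat_mul_sub_right hA hB.1).add hB.nonNegMat_sub_one

end Matrices

section FiringSequences

variable {Q : Type} {d : ℕ} {π : FSeq Q d} {t : Trans Q d}

theorem seqSupp_cons (α : ℚ) (t : Trans Q d) (π : FSeq Q d) :
    seqSupp ((α, t) :: π) = insert t (seqSupp π) := by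
  ext s
  simp [seqSupp, exists_or]

/-- The linear part of firing `π`: the product `A_k ⋯ A_1` of the matrices of its transitions,
the first transition fired being the rightmost factor. -/
def seqMat : FSeq Q d → Mat d
  | [] => 1
  | (_, t) :: π => seqMat π * t.mat

theorem selfLoopMat_seqMat (hπ : ∀ t ∈ seqSupp π, SelfLoopMat t.mat) :
    SelfLoopMat (seqMat π) := by
  induction π with
  | nil => exact selfLoopMat_one
  | cons a π ih =>
    rw [seqSupp_cons, Set.forall_mem_insert] at hπ
    exact (ih hπ.2).mul hπ.1

theorem nonNegMat_seqMat_sub_mat (hπ : ∀ t ∈ seqSupp π, SelfLoopMat t.mat)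
    (ht : t ∈ seqSupp π) : NonNegMat (seqMat π - t.mat) := by
  induction π with
  | nil => simp [seqSupp] at ht
  | cons a π ih =>
    rw [seqSupp_cons, Set.forall_mem_insert] at hπ
    have hE : SelfLoopMat (seqMat π) := selfLoopMat_seqMat hπ.2
    rw [seqSupp_cons] at ht
    rcases ht with rfl | ht
    · exact nonNegMat_mul_sub_right hE hπ.1.1
    · simpa only [seqMat, sub_add_sub_cancel] using
        (nonNegMat_mul_sub_left hE.1 hπ.1).add (ih hπ.2 ht)

theorem mem_suppPump_iff {x y : Fin d} : y ∈ suppPump t x ↔ 0 < (t.mat - 1) x y := by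
  rcases eq_or_ne x y with rfl | hne
  · simp [suppPump]
  · simp [suppPump, hne, hne.symm]

theorem seqMat_sub_one_mulVec_pos (hπ : ∀ t ∈ seqSupp π, SelfLoopMat t.mat) {v : Vec d}
    (hv : NonNeg v) (ht : t ∈ seqSupp π) {x : Fin d} (hx : (suppPump t x ∩ supp v).Nonempty) :
    0 < (castMat (seqMat π - 1)).mulVec v x := by
  obtain ⟨y, hpump, hy⟩ := hx
  have hle : (t.mat - 1) x y ≤ (seqMat π - 1) x y :=
    sub_le_sub_right (sub_nonneg.1 (nonNegMat_seqMat_sub_mat hπ ht x y)) _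
  exact (selfLoopMat_seqMat hπ).nonNegMat_sub_one.mulVec_pos hv
    ((mem_suppPump_iff.1 hpump).trans_le hle) ((hv y).lt_of_ne' hy)

end FiringSequences

section Runs

variable {Q : Type} {d : ℕ} {M : ACV Q d} {C C' C'' : Conf Q d} {π π' : FSeq Q d}

theorem Run.nonNeg_left (h : Run M C π C') : NonNeg C.2 := by
  cases h with
  | nil _ h => exact h
  | cons hs _ => exact hs.2.2.2.2.2.1

theorem Run.nonNeg_right (h : Run M C π C') : NonNeg C'.2 := by
  induction h with
  | nil _ h => exact h
  | cons _ _ ih => exact ih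

theorem Run.seqSupp_subset (h : Run M C π C') : seqSupp π ⊆ M.T := by
  induction h with
  | nil => simp [seqSupp]
  | cons hs _ ih =>
    rw [seqSupp_cons]
    exact Set.insert_subset hs.1 ih

theorem PumpedBy.mem_seqSupp {t : Trans Q d} {x : Fin d} (h : PumpedBy M C π t x) :
    t ∈ seqSupp π := by
  obtain ⟨π₁, α, π₂, _, _, rfl, _⟩ := h
  exact ⟨α, by simp⟩

theorem Run.append (h : Run M C π C') (h' : Run M C' π' C'') : Run M C (π ++ π') C'' := by
  induction h with
  | nil => exact h'
  | cons hs _ ih => exact .cons hs (ih h')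

theorem nonNeg_smul_add {β : ℚ} (hβ : 0 ≤ β) {a z : Vec d} (ha : NonNeg a) (hz : NonNeg z) :
    NonNeg (β • a + z) :=
  fun i => add_nonneg (mul_nonneg hβ (ha i)) (hz i)

theorem Step.scale_add {α β : ℚ} {t : Trans Q d} {z : Vec d} (h : Step M C α t C')
    (ht : NonNegMat t.mat) (hβ : 0 < β) (hβ1 : β ≤ 1) (hz : NonNeg z) :
    Step M (C.1, β • C.2 + z) (β * α) t (C'.1, β • C'.2 + (castMat t.mat).mulVec z) := by
  obtain ⟨hT, hα, hα1, hsrc, htgt, hC, hC', heq⟩ := h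
  refine ⟨hT, mul_pos hβ hα, mul_le_one₀ hβ1 hα.le hα1, hsrc, htgt, nonNeg_smul_add hβ.le hC hz,
    nonNeg_smul_add hβ.le hC' (ht.mulVec_nonneg hz), ?_⟩
  simp only [heq, Matrix.mulVec_add, Matrix.mulVec_smul, smul_add, mul_smul]
  abel

theorem Run.scaleSeq_add {β : ℚ} (h : Run M C π C') (hπ : ∀ t ∈ seqSupp π, NonNegMat t.mat)
    (hβ : 0 < β) (hβ1 : β ≤ 1) {z : Vec d} (hz : NonNeg z) :
    Run M (C.1, β • C.2 + z) (scaleSeq β π)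
      (C'.1, β • C'.2 + (castMat (seqMat π)).mulVec z) := by
  induction h generalizing z with
  | nil C hC =>
    rw [seqMat, castMat_one, Matrix.one_mulVec]
    exact .nil _ (nonNeg_smul_add hβ.le hC hz)
  | cons hs _ ih =>
    rw [seqSupp_cons, Set.forall_mem_insert] at hπ
    rw [seqMat, castMat_mul, ← Matrix.mulVec_mulVec]
    exact .cons (hs.scale_add hπ.1 hβ hβ1 hz) (ih hπ.2 (hπ.1.mulVec_nonneg hz))

variable {p : Q} {u v : Vec d}

theorem Run.scaleSeq_of_smul_le {q : Q} {β : ℚ} {w : Vec d} (h : Run M (p, u) π (q, v))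
    (hπ : ∀ t ∈ seqSupp π, NonNegMat t.mat) (hβ : 0 < β) (hβ1 : β ≤ 1) (hw : β • u ≤ w) :
    Run M (p, w) (scaleSeq β π)
      (q, w + β • (v - u) + (castMat (seqMat π - 1)).mulVec (w - β • u)) := by
  have hrun := h.scaleSeq_add hπ hβ hβ1 (z := w - β • u) (sub_nonneg.2 hw)
  rw [add_sub_cancel] at hrun
  convert hrun using 2
  rw [castMat_sub, castMat_one, Matrix.sub_mulVec, Matrix.one_mulVec, smul_sub]
  abel

theorem exists_run_replicate_scaleSeq {β γ : ℚ} (h : Run M (p, u) π (p, v))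
    (hπ : ∀ t ∈ seqSupp π, SelfLoopMat t.mat) (hβ : 0 < β) (hγ : 0 < γ) (j : ℕ)
    (hj : j * β ≤ 1 - γ) :
    ∃ w, Run M (p, u) (scaleSeq γ π ++ (List.replicate j (scaleSeq β π)).flatten) (p, w) ∧
      u + (γ + j * β) • (v - u) + (j * γ) • (castMat (seqMat π - 1)).mulVec v ≤ w := by
  have hu : 0 ≤ u := h.nonNeg_left
  have hv : 0 ≤ v := h.nonNeg_right
  have hnn : ∀ t ∈ seqSupp π, NonNegMat t.mat := fun t ht => (hπ t ht).1
  have hgain : NonNegMat (seqMat π - 1) := (selfLoopMat_seqMat hπ).nonNegMat_sub_one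
  induction j with
  | zero =>
    have hγ1 : γ ≤ 1 := by simpa using hj
    have hγu : γ • u ≤ u := smul_le_of_le_one_left hu hγ1
    refine ⟨_, by simpa using h.scaleSeq_of_smul_le hnn hγ hγ1 hγu, ?_⟩
    simpa using hgain.mulVec_nonneg (sub_nonneg.2 hγu)
  | succ j ih =>
    push_cast at hj
    obtain ⟨w, hrun, hw⟩ := ih (by linarith)
    have hjβ : 0 ≤ j * β := by positivity
    have hreserve : γ • v ≤ w - β • u :=
      smul_le_sub_smul_of_add_smul_sub_le hu hv hjβ (by linarith) <|
        (le_add_of_nonneg_right (smul_nonneg (by positivity) (hgain.mulVec_nonneg hv))).trans hw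
    have hβu : β • u ≤ w := sub_nonneg.1 ((smul_nonneg hγ.le hv).trans hreserve)
    refine ⟨w + β • (v - u) + (castMat (seqMat π - 1)).mulVec (w - β • u), ?_, ?_⟩
    · have hcopy := h.scaleSeq_of_smul_le hnn hβ (by linarith) hβu
      simpa [List.replicate_succ'] using hrun.append hcopy
    · calc u + (γ + (j + 1 : ℕ) * β) • (v - u)
            + ((j + 1 : ℕ) * γ) • (castMat (seqMat π - 1)).mulVec v
          = u + (γ + j * β) • (v - u) + (j * γ) • (castMat (seqMat π - 1)).mulVec v
            + β • (v - u) + (castMat (seqMat π - 1)).mulVec (γ • v) := by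
            rw [Matrix.mulVec_smul]
            push_cast
            module
        _ ≤ w + β • (v - u) + (castMat (seqMat π - 1)).mulVec (w - β • u) := by
            gcongr
            exact hgain.mulVec_mono hreserve

theorem exists_run_add_smul_mulVec_le (h : Run M (p, u) π (p, v))
    (hπ : ∀ t ∈ seqSupp π, SelfLoopMat t.mat) {n : ℕ} (hn : 1 ≤ n) :
    ∃ w, Run M (p, u)
        (scaleSeq (1 / 2) π ++ (List.replicate n (scaleSeq (1 / (2 * (n : ℚ))) π)).flatten)
        (p, w) ∧
      v + (n / 2 : ℚ) • (castMat (seqMat π - 1)).mulVec v ≤ w := by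
  have : (0 : ℚ) < n := by exact_mod_cast hn
  have hhalf : (n : ℚ) * (1 / (2 * n)) = 1 / 2 := by field_simp
  obtain ⟨w, hrun, hw⟩ := exists_run_replicate_scaleSeq h hπ (β := 1 / (2 * n)) (γ := 1 / 2)
    (by positivity) (by norm_num) n (by rw [hhalf]; norm_num)
  refine ⟨w, hrun, ?_⟩
  rwa [hhalf, add_halves, one_smul, add_sub_cancel, mul_one_div] at hw

end Runs

theorem pumping_counters_general {Q : Type} {d : ℕ} {M : ACV Q d} {p : Q} {u v : Vec d}
    {π : FSeq Q d} (hrun : Run M (p, u) π (p, v)) (hπ : ∀ t ∈ seqSupp π, SelfLoopMat t.mat)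
    {S : Set (Fin d)} (hS : ∀ x ∈ S, ∃ t ∈ seqSupp π, (suppPump t x ∩ supp v).Nonempty)
    (K : ℚ) :
    ∀ᶠ n : ℕ in Filter.atTop, ∃ w : Vec d,
      Run M (p, u)
        (scaleSeq (1 / 2) π ++ (List.replicate n (scaleSeq (1 / (2 * (n : ℚ))) π)).flatten)
        (p, w) ∧
      v ≤ w ∧ ∀ x ∈ S, K < w x := by
  have hv : 0 ≤ v := hrun.nonNeg_right
  set gain : Vec d := (castMat (seqMat π - 1)).mulVec v
  have hgain : 0 ≤ gain := (selfLoopMat_seqMat hπ).nonNegMat_sub_one.mulVec_nonneg hv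
  have hlarge : ∀ᶠ n : ℕ in Filter.atTop, ∀ x ∈ S, K < n * (gain x / 2) := by
    refine (Filter.eventually_all_finite S.toFinite).2 fun x hx => ?_
    obtain ⟨t, ht, hpump⟩ := hS x hx
    have hpos : 0 < gain x := seqMat_sub_one_mulVec_pos hπ hv ht hpump
    exact (tendsto_natCast_atTop_atTop.atTop_mul_const (half_pos hpos)).eventually_gt_atTop K
  filter_upwards [hlarge, Filter.eventually_ge_atTop 1] with n hK hn
  obtain ⟨w, hrun', hw⟩ := exists_run_add_smul_mulVec_le hrun hπ hn
  refine ⟨w, hrun', (le_add_of_nonneg_right (smul_nonneg (by positivity) hgain)).trans hw,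
    fun x hx => ?_⟩
  calc K < n * (gain x / 2) := hK x hx
    _ = n / 2 * gain x := by ring
    _ ≤ v x + n / 2 * gain x := le_add_of_nonneg_left (hv x)
    _ ≤ w x := hw x

/-- Pumping Counters Lemma. -/
theorem pumping_counters
    {Q : Type} [Fintype Q] {d : ℕ} (M : ACV Q d) (hM : SelfLoopVASS M)
    (p : Q) (u v : Vec d) (π : FSeq Q d) (hrun : Run M (p, u) π (p, v))
    (S : Set (Fin d))
    (hS : ∀ x ∈ S, ∃ t : Trans Q d,
      PumpedBy M (p, u) π t x ∧ (suppPump t x ∩ supp v).Nonempty)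
    (K : ℚ) (hK : 0 < K) :
    ∃ n : ℕ, 1 ≤ n ∧ ∃ w : Vec d,
      Run M (p, u)
        (scaleSeq (1 / 2) π ++ (List.replicate n (scaleSeq (1 / (2 * (n : ℚ))) π)).flatten)
        (p, w) ∧
      v ≤ w ∧ ∀ x ∈ S, K < w x := by
  have hS' : ∀ x ∈ S, ∃ t ∈ seqSupp π, (suppPump t x ∩ supp v).Nonempty := fun x hx =>
    (hS x hx).imp fun _ h => ⟨h.1.mem_seqSupp, h.2⟩
  exact ((Filter.eventually_ge_atTop 1).and
    (pumping_counters_general hrun (fun t ht => hM t (hrun.seqSupp_subset ht)) hS' K)).exists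

end ACVASS
end

section
/- Let M = (Q,T) be a d-dimensional affine continuous VASS all of whose transition matrices are non-negative self-loop matrices, and let p(u), q(v) be configurations. Then p(u) covers q(v) if and only if there exist k ≥ 1, pairwise distinct states p₁,…,p_k ∈ Q and vectors u₁,u₁',…,u_k,u_k' ∈ ℚ₊^d such that p₁ = p, u₁ = u, p_k = q, u_k' ≥ v componentwise, for every i ∈ {1,…,k} the configuration p_i(u_i) covers p_i(u_i'), and for every i ∈ {1,…,k−1} there is a single step p_i(u_i') →^{αt} p_{i+1}(u_{i+1}) for some α ∈ (0,1] and transition t. -/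
namespace ACVASS

/-! Prepend the steps of a run one at a time, keeping a chain of blocks: each block starts and ends
in the same state, a single step joins consecutive blocks, and no state starts two of them. When the
prepended state already starts a block, that block absorbs the new step together with everything
before it. Conversely, updates with non-negative matrices are monotone, so coverability is
transitive and the pieces of a witness compose. -/

open Relation Matrix

section LoopErasure

variable {α β : Type*} {r : α → α → Prop} {f : α → β} {n : ℕ} {x y : Fin (n + 1) → α}

theorem rel_of_blocks {s : α → α → Prop} [IsTrans α s] (hblock : ∀ i, s (x i) (y i))
    (hstep : ∀ i : Fin n, s (y i.castSucc) (x i.succ)) (j : Fin (n + 1)) : s (x 0) (y j) := by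
  induction j using Fin.induction with
  | zero => exact hblock 0
  | succ i ih => exact trans_of s (trans_of s ih (hstep i)) (hblock i.succ)

/-- A loop-erased path from `x 0` to `y (Fin.last n)` in the graph of `r`, whose vertices are
labelled by `f`: the `i`-th block is a path from `x i` to `y i`, distinct blocks start at distinct
labels, and consecutive blocks are joined by one edge. Only the endpoints of a block have to carry
its label; its interior is unconstrained. -/
structure IsLoopErasure (r : α → α → Prop) (f : α → β) {n : ℕ} (x y : Fin (n + 1) → α) :
    Prop where
  injective : Function.Injective (f ∘ x)
  label_eq : ∀ i, f (y i) = f (x i)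
  block : ∀ i, ReflTransGen r (x i) (y i)
  step : ∀ i : Fin n, r (y i.castSucc) (x i.succ)

namespace IsLoopErasure

theorem singleton (a : α) : IsLoopErasure r f (fun _ : Fin 1 => a) (fun _ => a) where
  injective i j _ := Subsingleton.elim (α := Fin 1) i j
  label_eq _ := rfl
  block _ := .refl
  step i := i.elim0

theorem reflTransGen (h : IsLoopErasure r f x y) (j : Fin (n + 1)) : ReflTransGen r (x 0) (y j) :=
  rel_of_blocks h.block (fun i => .single (h.step i)) j

theorem cons (h : IsLoopErasure r f x y) {a : α} (ha : r a (x 0)) (hf : f a ∉ Set.range (f ∘ x)) :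
    IsLoopErasure r f (Fin.cons a x : Fin (n + 2) → α) (Fin.cons a y : Fin (n + 2) → α) where
  injective := by
    rw [Fin.comp_cons]
    exact Fin.cons_injective_iff.2 ⟨hf, h.injective⟩
  label_eq := Fin.cases rfl h.label_eq
  block := Fin.cases .refl h.block
  step := Fin.cases ha h.step

theorem drop (h : IsLoopErasure r f x y) (j : Fin (n + 1)) :
    IsLoopErasure r f (fun i : Fin (n - j + 1) => x ⟨j + i, by omega⟩)
      (fun i => y ⟨j + i, by omega⟩) where
  injective i k hik := by
    have := congrArg Fin.val (h.injective hik)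
    exact Fin.ext (by simpa using this)
  label_eq _ := h.label_eq _
  block _ := h.block _
  step i := h.step ⟨j + i, by omega⟩

theorem update_zero (h : IsLoopErasure r f x y) {a : α} (ha : ReflTransGen r a (y 0))
    (hf : f a = f (x 0)) : IsLoopErasure r f (Function.update x 0 a) y := by
  have hlabel : f ∘ Function.update x 0 a = f ∘ x := by
    rw [Function.comp_update, hf]
    exact Function.update_eq_self 0 (f ∘ x)
  exact
    { injective := hlabel ▸ h.injective
      label_eq := fun i => (h.label_eq i).trans (congrFun hlabel i).symm
      block := Fin.cases (by simpa using ha) fun i => by simpa using h.block i.succ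
      step := fun i => by simpa using h.step i }

end IsLoopErasure

theorem exists_isLoopErasure (f : α → β) {a b : α} (h : ReflTransGen r a b) :
    ∃ (n : ℕ) (x y : Fin (n + 1) → α), IsLoopErasure r f x y ∧ x 0 = a ∧ y (Fin.last n) = b := by
  induction h using ReflTransGen.head_induction_on with
  | refl => exact ⟨0, _, _, .singleton b, rfl, rfl⟩
  | @head a c hac _ ih =>
    obtain ⟨n, x, y, hxy, rfl, rfl⟩ := ih
    by_cases hf : f a ∈ Set.range (f ∘ x)
    · obtain ⟨j, hj⟩ := hf
      refine ⟨n - j, _, _, (hxy.drop j).update_zero (.head hac (hxy.reflTransGen j)) hj.symm,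
        Function.update_self .., congrArg y (Fin.ext ?_)⟩
      simp only [Fin.val_last]
      omega
    · exact ⟨n + 1, _, _, hxy.cons hac hf, rfl, rfl⟩

end LoopErasure

theorem mulVec_le_mulVec {m n R : Type*} [Fintype n] [Semiring R] [PartialOrder R]
    [IsOrderedRing R] {A : Matrix m n R} (hA : ∀ i j, 0 ≤ A i j) {u v : n → R} (huv : u ≤ v) :
    A *ᵥ u ≤ A *ᵥ v :=
  fun i => dotProduct_le_dotProduct_of_nonneg_left huv (hA i)

section Coverability

variable {Q : Type} {d : ℕ} {M : ACV Q d} {C C' C'' : Conf Q d} {α : ℚ} {t : Trans Q d}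

theorem SelfLoopVASS.nonNegVASS (hM : SelfLoopVASS M) : NonNegVASS M := fun t ht => (hM t ht).1

theorem Step.nonNeg_src (h : Step M C α t C') : NonNeg C.2 := h.2.2.2.2.2.1

theorem Step.nonNeg_tgt (h : Step M C α t C') : NonNeg C'.2 := h.2.2.2.2.2.2.1

/-- The one-step relation `C → C'`, with the transition and its fraction left unspecified. -/
def StepRel (M : ACV Q d) (C C' : Conf Q d) : Prop := ∃ α t, Step M C α t C'

theorem reach_iff_reflTransGen : Reach M C C' ↔ NonNeg C.2 ∧ ReflTransGen (StepRel M) C C' := by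
  constructor
  · rintro ⟨_, hrun⟩
    induction hrun with
    | nil _ h => exact ⟨h, .refl⟩
    | cons hs _ ih => exact ⟨hs.nonNeg_src, .head ⟨_, _, hs⟩ ih.2⟩
  · rintro ⟨hC, h⟩
    induction h using ReflTransGen.head_induction_on with
    | refl => exact ⟨[], .nil _ hC⟩
    | head hs _ ih =>
      obtain ⟨α, t, hs⟩ := hs
      obtain ⟨π, hrun⟩ := ih hs.nonNeg_tgt
      exact ⟨(α, t) :: π, .cons hs hrun⟩

theorem Reach.trans (h : Reach M C C') (h' : Reach M C' C'') : Reach M C C'' := by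
  rw [reach_iff_reflTransGen] at *
  exact ⟨h.1, h.2.trans h'.2⟩

theorem Step.reach (h : Step M C α t C') : Reach M C C' :=
  reach_iff_reflTransGen.2 ⟨h.nonNeg_src, .single ⟨α, t, h⟩⟩

theorem Reach.covers (h : Reach M C C') : Covers M C C' := ⟨C'.2, le_rfl, h⟩

theorem Reach.trans_covers (h : Reach M C C') : Covers M C' C'' → Covers M C C'' :=
  fun ⟨v, hv, h'⟩ => ⟨v, hv, h.trans h'⟩

theorem Covers.mono_right {q : Q} {v w : Vec d} (h : Covers M C (q, w)) (hvw : v ≤ w) :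
    Covers M C (q, v) :=
  let ⟨w', hw', hreach⟩ := h
  ⟨w', hvw.trans hw', hreach⟩

theorem Step.exists_le_of_le (ht : NonNegMat t.mat) (h : Step M C α t C') {u : Vec d}
    (hu : C.2 ≤ u) : ∃ w, C'.2 ≤ w ∧ Step M (C.1, u) α t (C'.1, w) := by
  obtain ⟨hmem, hpos, hle, hsrc, htgt, hC, hC', heq⟩ := h
  have hmono : C'.2 ≤ castMat t.mat *ᵥ u + α • castVec t.upd := by
    rw [heq]
    gcongr
    exact mulVec_le_mulVec (fun i j => Int.cast_nonneg (ht i j)) hu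
  exact ⟨_, hmono, hmem, hpos, hle, hsrc, htgt, fun i => (hC i).trans (hu i),
    fun i => (hC' i).trans (hmono i), rfl⟩

theorem Run.covers_of_le (hM : NonNegVASS M) {π : FSeq Q d} (h : Run M C π C') {u : Vec d}
    (hu : C.2 ≤ u) : Covers M (C.1, u) C' := by
  induction h generalizing u with
  | nil _ h => exact ⟨u, hu, [], .nil _ fun i => (h i).trans (hu i)⟩
  | cons hs _ ih =>
    obtain ⟨w, hw, hs'⟩ := hs.exists_le_of_le (hM _ hs.1) hu
    exact hs'.reach.trans_covers (ih hw)

theorem Covers.trans (hM : NonNegVASS M) (h : Covers M C C') (h' : Covers M C' C'') :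
    Covers M C C'' := by
  obtain ⟨w, hw, hreach⟩ := h
  obtain ⟨v, hv, _, hrun⟩ := h'
  exact (hreach.trans_covers (hrun.covers_of_le hM hw)).mono_right hv

theorem IsLoopErasure.covers {β : Type*} {f : Conf Q d → β} {n : ℕ} {x y : Fin (n + 1) → Conf Q d}
    (h : IsLoopErasure (StepRel M) f x y) (h0 : NonNeg (x 0).2) (i : Fin (n + 1)) :
    Covers M (x i) (y i) := by
  have hx : NonNeg (x i).2 := by
    cases i using Fin.cases with
    | zero => exact h0
    | succ i =>
      obtain ⟨_, _, hs⟩ := h.step i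
      exact hs.nonNeg_tgt
  exact (reach_iff_reflTransGen.2 ⟨hx, h.block i⟩).covers

theorem coverability_iff_witness_general (hM : NonNegVASS M) (p q : Q) (u v : Vec d) :
    Covers M (p, u) (q, v) ↔
      ∃ (k : ℕ) (hk : 1 ≤ k) (ps : Fin k → Q) (us us' : Fin k → Vec d),
        Function.Injective ps ∧
        ps ⟨0, hk⟩ = p ∧ us ⟨0, hk⟩ = u ∧
        ps ⟨k - 1, Nat.sub_one_lt_of_lt hk⟩ = q ∧
        v ≤ us' ⟨k - 1, Nat.sub_one_lt_of_lt hk⟩ ∧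
        (∀ i : Fin k, Covers M (ps i, us i) (ps i, us' i)) ∧
        (∀ (i : ℕ) (h1 : i + 1 < k), ∃ (α : ℚ) (t : Trans Q d),
          Step M (ps ⟨i, Nat.lt_of_succ_lt h1⟩, us' ⟨i, Nat.lt_of_succ_lt h1⟩) α t
            (ps ⟨i + 1, h1⟩, us ⟨i + 1, h1⟩)) := by
  constructor
  · rintro ⟨v', hv', hreach⟩
    obtain ⟨hu, hpath⟩ := reach_iff_reflTransGen.1 hreach
    obtain ⟨n, x, y, hxy, hx, hy⟩ := exists_isLoopErasure Prod.fst hpath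
    have hy_eq (i) : ((x i).1, (y i).2) = y i := Prod.ext (hxy.label_eq i).symm rfl
    refine ⟨n + 1, by omega, fun i => (x i).1, fun i => (x i).2, fun i => (y i).2, hxy.injective,
      congrArg Prod.fst hx, congrArg Prod.snd hx, ?_, hv'.trans (congrArg Prod.snd hy).ge,
      fun i => ?_, fun i hi => ?_⟩
    · exact (hxy.label_eq _).symm.trans (congrArg Prod.fst hy)
    · rw [hy_eq]
      exact hxy.covers (hx ▸ hu) i
    · rw [hy_eq]
      exact hxy.step ⟨i, by omega⟩
  · rintro ⟨k, hk, ps, us, us', -, rfl, rfl, rfl, hv, hcov, hstep⟩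
    obtain ⟨n, rfl⟩ := Nat.exists_eq_add_of_le' hk
    have : IsTrans (Conf Q d) (Covers M) := ⟨fun _ _ _ => Covers.trans hM⟩
    refine (rel_of_blocks (s := Covers M) hcov (fun i => ?_) (Fin.last n)).mono_right hv
    obtain ⟨_, _, hs⟩ := hstep i (by omega)
    exact hs.reach.covers

end Coverability

/-- characterization of coverability by witnesses. -/
theorem coverability_iff_witness
    {Q : Type} [Fintype Q] {d : ℕ} (M : ACV Q d) (hM : SelfLoopVASS M)
    (p q : Q) (u v : Vec d) (hu : NonNeg u) (hv : NonNeg v) :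
    Covers M (p, u) (q, v) ↔
      ∃ (k : ℕ) (hk : 1 ≤ k) (ps : Fin k → Q) (us us' : Fin k → Vec d),
        Function.Injective ps ∧
        ps ⟨0, by omega⟩ = p ∧ us ⟨0, by omega⟩ = u ∧
        ps ⟨k - 1, by omega⟩ = q ∧ v ≤ us' ⟨k - 1, by omega⟩ ∧
        (∀ i : Fin k, Covers M (ps i, us i) (ps i, us' i)) ∧
        (∀ (i : ℕ) (h1 : i + 1 < k), ∃ (α : ℚ) (t : Trans Q d),
          Step M (ps ⟨i, by omega⟩, us' ⟨i, by omega⟩) α t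
            (ps ⟨i + 1, h1⟩, us ⟨i + 1, h1⟩)) :=
  coverability_iff_witness_general hM.nonNegVASS p q u v

end ACVASS
end
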